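/- For 0 < α < 1 and all z ∈ 𝔻, the quantity Re(1 + z·h_α''(z)/h_α'(z)) satisfies: Re(1 + z·h_α''(z)/h_α'(z)) ≥ (4α−1)/5 when 1/2 ≤ α < 1, and Re(1 + z·h_α''(z)/h_α'(z)) ≥ α/(3−α) when 0 < α ≤ 1/2. -/

import Mathlib

/-- The unit disk `{z : ℂ | |z| < 1}`. -/
noncomputable def unitDisk : Set ℂ := Metric.ball 0 1

/-- The extremal convex function of order `α`:
`k_α(z) = ((1-z)^(2α-1) - 1)/(1-2α)` (so that `k_α(0)=0`, `k_α'(0)=1`),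
with `k_{1/2}(z) = -log(1-z)` (principal branches). -/
noncomputable def kfun (α : ℝ) (z : ℂ) : ℂ :=
  if α = 1 / 2 then -Complex.log (1 - z)
  else ((1 - z) ^ ((2 * α - 1 : ℝ) : ℂ) - 1) / ((1 - 2 * α : ℝ) : ℂ)

/-- `h_α(z) = k_α(z)/z` for `z ≠ 0`, `h_α(0) = 1`. -/
noncomputable def hfun (α : ℝ) (z : ℂ) : ℂ :=
  if z = 0 then 1 else kfun α z / z

/-- `f ∈ K(α)`: `f` is analytic on the unit disk, normalized by `f(0)=0`, `f'(0)=1`,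
with nonvanishing derivative and `Re(1 + z f''(z)/f'(z)) > α` on the disk. -/
def IsConvexOfOrder (α : ℝ) (f : ℂ → ℂ) : Prop :=
  DifferentiableOn ℂ f unitDisk ∧ f 0 = 0 ∧ deriv f 0 = 1 ∧
    ∀ z ∈ unitDisk, deriv f z ≠ 0 ∧
      α < (1 + z * deriv (deriv f) z / deriv f z).re

/-!
Differentiating `z * h z = k z` twice gives
`2 * h' z + z * h'' z = 2 * (1 - α) * (1 - z) ^ (-(3 - 2 * α))`.
Hence `G z = (1 - z) ^ (3 - 2 * α) * h' z / (1 - α)` satisfies `1 + z * h'' z / h' z = 2 / G z - 1`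
together with the first-order equation
`z * G' z = 2 * (1 - G z) - (3 - 2 * α) * (z / (1 - z)) * G z`, `G 0 = 1`.
For real `a` with `|a| < 1`, the inequality `a < re (2 / G z - 1)` says that `f = (1 + a) * G - 1`
has modulus less than `1` at `z`. At a first point `z₀` where `‖f z₀‖ = 1`, Jack's lemma gives
`z₀ * f' z₀ = m * f z₀` with `(1 - |a|) / (1 + |a|) ≤ m`, and the differential equation then reads
`2 * (3 - 2 * α) * re (z₀ / (1 - z₀)) = -(2 * (1 - a) + m)`. Since `-1 / 2 < re (z₀ / (1 - z₀))`,
this is impossible as soon as `3 - 2 * α ≤ 2 * (1 - a) + (1 - |a|) / (1 + |a|)`, which holds for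
`a = α / (3 - α)` and, if `1 / 4 ≤ α`, for `a = (4 * α - 1) / 5`.
-/

open Metric Set
open scoped ComplexConjugate

/-- The point of smallest norm at which `g` reaches the level `c`. -/
theorem exists_mem_ball_eq_and_forall_norm_lt {E : Type*} [NormedAddCommGroup E] [NormedSpace ℝ E]
    [ProperSpace E] {g : E → ℝ} {c R : ℝ} {x : E} (hg : ContinuousOn g (ball 0 R)) (h0 : g 0 < c)
    (hx : x ∈ ball 0 R) (hcx : c ≤ g x) :
    ∃ y ∈ ball (0 : E) R, g y = c ∧ ∀ z ∈ ball (0 : E) ‖y‖, g z < c := by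
  have closedBall_subset : ∀ {y : E}, y ∈ ball 0 R → closedBall 0 ‖y‖ ⊆ ball (0 : E) R :=
    fun hy => closedBall_subset_ball (mem_ball_zero_iff.1 hy)
  have hcompact : IsCompact (closedBall 0 ‖x‖ ∩ g ⁻¹' Ici c) :=
    (isCompact_closedBall _ _).of_isClosed_subset
      ((hg.mono (closedBall_subset hx)).preimage_isClosed_of_isClosed isClosed_closedBall
        isClosed_Ici)
      inter_subset_left
  obtain ⟨y, ⟨hyx, hcy⟩, hmin⟩ := hcompact.exists_isMinOn ⟨x, by simp, hcx⟩
    continuous_norm.continuousOn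
  have hy : y ∈ ball 0 R := closedBall_subset hx hyx
  have hlt : ∀ z ∈ ball (0 : E) ‖y‖, g z < c := by
    intro z hz
    by_contra! hcz
    have hzy : ‖z‖ < ‖y‖ := mem_ball_zero_iff.1 hz
    have hzx : z ∈ closedBall 0 ‖x‖ :=
      mem_closedBall_zero_iff.2 (hzy.le.trans (mem_closedBall_zero_iff.1 hyx))
    exact (hmin ⟨hzx, hcz⟩).not_gt hzy
  have hy0 : ‖y‖ ≠ 0 := by
    intro h
    rw [norm_eq_zero.1 h] at hcy
    exact h0.not_ge hcy
  have hle : g y ≤ c := by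
    have hcont := hg.mono (closedBall_subset hy)
    rw [← closure_ball (0 : E) hy0] at hcont
    refine le_on_closure (fun z hz => (hlt z hz).le) hcont continuousOn_const ?_
    simp [closure_ball (0 : E) hy0]
  exact ⟨y, hy, hle.antisymm hcy, hlt⟩

theorem sameRay_gradient_of_isLocalMaxOn_ball {E : Type*} [NormedAddCommGroup E]
    [InnerProductSpace ℝ E] {g : E → ℝ} {v c x : E} (hg : HasFDerivAt g (innerSL ℝ v) x)
    (hmax : IsLocalMaxOn g (ball c (dist x c)) x) : SameRay ℝ v (x - c) := by
  have inner_nonpos : ∀ y ∈ closedBall c (dist x c), inner ℝ v (y - x) ≤ 0 := by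
    intro y hy
    rcases eq_or_ne x y with rfl | hne
    · simp
    · simpa using hmax.hasFDerivWithinAt_nonpos hg.hasFDerivWithinAt
        (sub_mem_posTangentConeAt_of_openSegment_subset
          (openSegment_subset_ball_of_ne (mem_closedBall.2 le_rfl) hy hne))
  rcases eq_or_ne v 0 with rfl | hv
  · exact SameRay.zero_left _
  have hv' : ‖v‖ ≠ 0 := norm_ne_zero_iff.2 hv
  have h := inner_nonpos (c + (‖x - c‖ / ‖v‖) • v) (by simp [norm_smul, hv', dist_eq_norm])
  have hsplit : c + (‖x - c‖ / ‖v‖) • v - x = (‖x - c‖ / ‖v‖) • v - (x - c) := by abel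
  rw [hsplit, inner_sub_right, inner_smul_right, real_inner_self_eq_norm_sq] at h
  have hmul : ‖x - c‖ / ‖v‖ * ‖v‖ ^ 2 = ‖v‖ * ‖x - c‖ := by field_simp
  rw [sameRay_iff_norm_smul_eq, eq_comm, ← inner_eq_norm_mul_iff_real]
  exact (real_inner_le_norm _ _).antisymm (by linarith)

theorem hasFDerivAt_const_mul_norm_sq_sub_norm_sq {w : ℂ → ℂ} {w' z₀ : ℂ} (c : ℝ)
    (hw : HasDerivAt w w' z₀) :
    HasFDerivAt (fun z => c * ‖w z‖ ^ 2 - ‖z‖ ^ 2)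
      (innerSL ℝ ((2 : ℝ) • (c • (conj w' * w z₀) - z₀))) z₀ := by
  refine (((hw.hasFDerivAt.restrictScalars ℝ).norm_sq.const_mul c).sub
    (hasFDerivAt_id z₀).norm_sq).congr_fderiv (ContinuousLinearMap.ext fun y => ?_)
  have hadjoint : inner ℝ (w z₀) (y * w') = inner ℝ (conj w' * w z₀) y := by
    rw [Complex.inner, Complex.inner, map_mul, Complex.conj_conj, mul_left_comm, mul_comm y,
      mul_assoc]
  simp only [sub_apply, smul_apply, id_eq, smul_eq_mul, nsmul_eq_mul, Nat.cast_ofNat,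
    ContinuousLinearMap.comp_apply, ContinuousLinearMap.comp_id,
    ContinuousLinearMap.coe_restrictScalars', ContinuousLinearMap.toSpanSingleton_apply,
    coe_innerSL_apply, hadjoint, real_inner_smul_left, inner_sub_left]
  ring

/-- **Jack's lemma**. By Schwarz's lemma, `‖z₀‖ ^ 2 * ‖w z‖ ^ 2 - ‖z‖ ^ 2` attains its maximum over
the disk `‖z‖ ≤ ‖z₀‖` at `z₀`. -/
theorem exists_one_le_and_mul_eq_of_norm_eq_one {w : ℂ → ℂ} {w' z₀ : ℂ} (hz₀ : z₀ ≠ 0)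
    (hw : DifferentiableOn ℂ w (ball 0 ‖z₀‖)) (hmaps : MapsTo w (ball 0 ‖z₀‖) (ball 0 1))
    (hw0 : w 0 = 0) (hw' : HasDerivAt w w' z₀) (hone : ‖w z₀‖ = 1) :
    ∃ m : ℝ, 1 ≤ m ∧ z₀ * w' = m * w z₀ := by
  have schwarz : ∀ z ∈ ball (0 : ℂ) ‖z₀‖, ‖z₀‖ ^ 2 * ‖w z‖ ^ 2 - ‖z‖ ^ 2 ≤ 0 := by
    intro z hz
    have h := Complex.dist_le_div_mul_dist_of_mapsTo_ball (R₂ := 1) hw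
      (by rw [hw0]; exact hmaps.mono_right ball_subset_closedBall) hz
    rw [hw0, dist_zero_right, dist_zero_right, one_div_mul_eq_div,
      le_div_iff₀' (norm_pos_iff.2 hz₀)] at h
    rw [← mul_pow, sub_nonpos]
    gcongr
  have hgrad := hasFDerivAt_const_mul_norm_sq_sub_norm_sq (‖z₀‖ ^ 2) hw'
  have hmax : IsLocalMaxOn (fun z => ‖z₀‖ ^ 2 * ‖w z‖ ^ 2 - ‖z‖ ^ 2) (ball 0 (dist z₀ 0)) z₀ := by
    refine Filter.eventually_of_mem self_mem_nhdsWithin fun z hz => ?_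
    simpa [hone] using schwarz z (by simpa using hz)
  obtain ⟨κ, hκ, hray⟩ := (sameRay_gradient_of_isLocalMaxOn_ball hgrad hmax).exists_nonneg_right
    (by simpa using hz₀)
  refine ⟨1 + κ / 2, by linarith, ?_⟩
  have hw_conj : conj (w z₀) * w z₀ = 1 := by
    rw [Complex.conj_mul', hone]; simp
  have hz_conj : conj z₀ * z₀ = ‖z₀‖ ^ 2 := Complex.conj_mul' z₀
  have hconj := congrArg conj hray
  simp only [Complex.real_smul, map_mul, map_sub, Complex.conj_ofReal, Complex.conj_conj,
    Complex.ofReal_pow, Complex.ofReal_ofNat, map_pow, map_ofNat, sub_zero] at hconj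
  have hne : (‖z₀‖ ^ 2 : ℂ) ≠ 0 := by simpa using hz₀
  apply mul_left_cancel₀ hne
  push_cast
  linear_combination (z₀ * w z₀ / 2) * hconj + (1 + κ / 2) * w z₀ * hz_conj
    - ‖z₀‖ ^ 2 * z₀ * w' * hw_conj

/-- The automorphism `ζ ↦ (ζ - b) / (1 - conj b * ζ)` of the unit disk, which moves `b` to `0`.
Meaningful for `‖b‖ < 1` and `‖ζ‖ ≤ 1`. -/
noncomputable def diskAut (b ζ : ℂ) : ℂ :=
  (ζ - b) / (1 - conj b * ζ)

section DiskAut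

variable {b ζ : ℂ}

theorem norm_one_sub_conj_mul_sq_sub_norm_sub_sq (b ζ : ℂ) :
    ‖1 - conj b * ζ‖ ^ 2 - ‖ζ - b‖ ^ 2 = (1 - ‖b‖ ^ 2) * (1 - ‖ζ‖ ^ 2) := by
  simp only [← Complex.normSq_eq_norm_sq, Complex.normSq_apply, Complex.sub_re, Complex.sub_im,
    Complex.one_re, Complex.one_im, Complex.mul_re, Complex.mul_im, Complex.conj_re,
    Complex.conj_im]
  ring

theorem one_sub_conj_mul_ne_zero (hb : ‖b‖ < 1) (hζ : ‖ζ‖ ≤ 1) : 1 - conj b * ζ ≠ 0 := by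
  refine sub_ne_zero.2 fun h => ?_
  have hlt : ‖conj b * ζ‖ < 1 := by
    rw [norm_mul, Complex.norm_conj]
    exact mul_lt_one_of_nonneg_of_lt_one_left (norm_nonneg b) hb hζ
  exact hlt.ne (by rw [← h, norm_one])

@[simp]
theorem diskAut_self (b : ℂ) : diskAut b b = 0 := by
  simp [diskAut]

theorem norm_diskAut_lt_one (hb : ‖b‖ < 1) (hζ : ‖ζ‖ < 1) : ‖diskAut b ζ‖ < 1 := by
  rw [diskAut, norm_div, div_lt_one (norm_pos_iff.2 (one_sub_conj_mul_ne_zero hb hζ.le))]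
  refine lt_of_pow_lt_pow_left₀ 2 (norm_nonneg _) (sub_pos.1 ?_)
  rw [norm_one_sub_conj_mul_sq_sub_norm_sub_sq]
  exact mul_pos (sub_pos.2 (pow_lt_one₀ (norm_nonneg _) hb two_ne_zero))
    (sub_pos.2 (pow_lt_one₀ (norm_nonneg _) hζ two_ne_zero))

theorem norm_diskAut_eq_one (hb : ‖b‖ < 1) (hζ : ‖ζ‖ = 1) : ‖diskAut b ζ‖ = 1 := by
  rw [diskAut, norm_div,
    div_eq_one_iff_eq (norm_ne_zero_iff.2 (one_sub_conj_mul_ne_zero hb hζ.le)), eq_comm,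
    ← pow_left_inj₀ (norm_nonneg _) (norm_nonneg _) two_ne_zero, ← sub_eq_zero,
    norm_one_sub_conj_mul_sq_sub_norm_sub_sq, hζ]
  ring

theorem hasDerivAt_diskAut (hb : ‖b‖ < 1) (hζ : ‖ζ‖ ≤ 1) :
    HasDerivAt (diskAut b) ((1 - ‖b‖ ^ 2) / (1 - conj b * ζ) ^ 2) ζ := by
  refine (((hasDerivAt_id ζ).sub_const b).div (((hasDerivAt_id ζ).const_mul (conj b)).const_sub 1)
    (one_sub_conj_mul_ne_zero hb hζ)).congr_deriv ?_
  rw [← Complex.conj_mul']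
  simp only [id]
  ring

theorem norm_sub_sq_mul_eq_of_norm_eq_one (b : ℂ) (hζ : ‖ζ‖ = 1) :
    (‖ζ - b‖ ^ 2 : ℂ) * ζ = (ζ - b) * (1 - conj b * ζ) := by
  have hζζ : ζ * conj ζ = 1 := by
    rw [Complex.mul_conj', hζ]; simp
  rw [← Complex.mul_conj', map_sub]
  linear_combination (ζ - b) * hζζ

end DiskAut

/-- Jack's lemma without the normalization `f 0 = 0`. -/
theorem exists_norm_sub_sq_div_le_and_mul_eq_of_norm_eq_one {f : ℂ → ℂ} {f' z₀ : ℂ} (hz₀ : z₀ ≠ 0)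
    (hf : DifferentiableOn ℂ f (ball 0 ‖z₀‖)) (hmaps : MapsTo f (ball 0 ‖z₀‖) (ball 0 1))
    (hf' : HasDerivAt f f' z₀) (hone : ‖f z₀‖ = 1) :
    ∃ m : ℝ, ‖f z₀ - f 0‖ ^ 2 / (1 - ‖f 0‖ ^ 2) ≤ m ∧ z₀ * f' = m * f z₀ := by
  set b := f 0
  have hlt : ∀ z ∈ ball (0 : ℂ) ‖z₀‖, ‖f z‖ < 1 := fun z hz => mem_ball_zero_iff.1 (hmaps hz)
  have hb : ‖b‖ < 1 := hlt 0 (mem_ball_self (norm_pos_iff.2 hz₀))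
  have hb_pos : 0 < 1 - ‖b‖ ^ 2 := sub_pos.2 (pow_lt_one₀ (norm_nonneg b) hb two_ne_zero)
  have hw : DifferentiableOn ℂ (diskAut b ∘ f) (ball 0 ‖z₀‖) := fun z hz =>
    (hasDerivAt_diskAut hb (hlt z hz).le).differentiableAt.comp_differentiableWithinAt z (hf z hz)
  obtain ⟨m, hm, hjack⟩ := exists_one_le_and_mul_eq_of_norm_eq_one hz₀ hw
    (fun z hz => mem_ball_zero_iff.2 (norm_diskAut_lt_one hb (hlt z hz))) (diskAut_self b)
    ((hasDerivAt_diskAut hb hone.le).comp z₀ hf') (norm_diskAut_eq_one hb hone)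
  refine ⟨m * (‖f z₀ - b‖ ^ 2 / (1 - ‖b‖ ^ 2)), le_mul_of_one_le_left (by positivity) hm, ?_⟩
  have hden := one_sub_conj_mul_ne_zero hb hone.le
  have hb_ne : (1 - ‖b‖ ^ 2 : ℂ) ≠ 0 := mod_cast hb_pos.ne'
  have hnum := norm_sub_sq_mul_eq_of_norm_eq_one b hone
  simp only [Function.comp_apply, diskAut] at hjack
  push_cast
  field_simp at hjack ⊢
  linear_combination hjack - m * hnum

theorem re_inv_one_add {ζ : ℂ} (hζ : 1 + ζ ≠ 0) :
    (1 + ζ)⁻¹.re = 1 / 2 + (1 - ‖ζ‖ ^ 2) / (2 * ‖1 + ζ‖ ^ 2) := by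
  have hpos : 0 < Complex.normSq (1 + ζ) := Complex.normSq_pos.2 hζ
  rw [Complex.inv_re, ← Complex.normSq_eq_norm_sq, ← Complex.normSq_eq_norm_sq]
  field_simp
  simp only [Complex.normSq_apply, Complex.add_re, Complex.add_im, Complex.one_re, Complex.one_im]
  ring

theorem one_half_lt_re_inv_one_add {ζ : ℂ} (hζ : ‖ζ‖ < 1) : 1 / 2 < (1 + ζ)⁻¹.re := by
  have hne : 1 + ζ ≠ 0 := Complex.slitPlane_ne_zero (Complex.mem_slitPlane_of_norm_lt_one hζ)
  have hpos : 0 < 1 - ‖ζ‖ ^ 2 := sub_pos.2 (pow_lt_one₀ (norm_nonneg ζ) hζ two_ne_zero)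
  rw [re_inv_one_add hne]
  exact lt_add_of_pos_right _ (by positivity)

theorem re_inv_one_add_of_norm_eq_one {ζ : ℂ} (hζ : ‖ζ‖ = 1) (hne : 1 + ζ ≠ 0) :
    (1 + ζ)⁻¹.re = 1 / 2 := by
  simp [re_inv_one_add hne, hζ]

theorem neg_half_lt_re_div_one_sub {z : ℂ} (hz : ‖z‖ < 1) : -1 / 2 < (z / (1 - z)).re := by
  have hne : 1 - z ≠ 0 := by
    simpa [sub_eq_add_neg] using
      Complex.slitPlane_ne_zero (Complex.mem_slitPlane_of_norm_lt_one (norm_neg z ▸ hz))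
  have hsplit : z / (1 - z) = (1 + -z)⁻¹ - 1 := by
    rw [← sub_eq_add_neg]
    field_simp
    ring
  have h := one_half_lt_re_inv_one_add (norm_neg z ▸ hz)
  rw [hsplit, Complex.sub_re, Complex.one_re]
  linarith

theorem one_sub_abs_div_one_add_abs_le {a : ℝ} (ha : |a| < 1) {ζ : ℂ} (hζ : ‖ζ‖ = 1) :
    (1 - |a|) / (1 + |a|) ≤ ‖ζ - a‖ ^ 2 / (1 - |a| ^ 2) := by
  have hdist : 1 - |a| ≤ ‖ζ - a‖ := by
    simpa [hζ] using norm_sub_norm_le ζ a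
  have hpos : 0 < 1 - |a| := sub_pos.2 ha
  calc (1 - |a|) / (1 + |a|) = (1 - |a|) ^ 2 / (1 - |a| ^ 2) := by
        have hfactor : 1 - |a| ^ 2 = (1 - |a|) * (1 + |a|) := by ring
        rw [hfactor]
        field_simp
    _ ≤ ‖ζ - a‖ ^ 2 / (1 - |a| ^ 2) := by
        have : 0 ≤ 1 - |a| ^ 2 := sub_nonneg.2 (pow_le_one₀ (abs_nonneg a) ha.le)
        gcongr

theorem two_mul_re_eq_of_norm_eq_one {a c m : ℝ} {ζ q : ℂ} (hζ : ‖ζ‖ = 1) (hne : 1 + ζ ≠ 0)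
    (h : m * ζ = c * (a - ζ) - (1 + ζ) * q) : 2 * q.re = -(c * (1 - a) + m) := by
  have hq : q = ((c * a + c + m : ℝ) : ℂ) * (1 + ζ)⁻¹ - ((c + m : ℝ) : ℂ) := by
    push_cast
    field_simp
    linear_combination h
  rw [hq, Complex.sub_re, Complex.re_ofReal_mul, Complex.ofReal_re,
    re_inv_one_add_of_norm_eq_one hζ hne]
  ring

/-- A differential subordination of Briot–Bouquet type: at a first point where `‖f‖ = 1`, Jack's
lemma turns the differential equation into an upper bound for `(q z).re`. -/
theorem norm_lt_one_of_mul_deriv_eq {R a c : ℝ} {f q : ℂ → ℂ} (ha : |a| < 1) (hc : 0 ≤ c)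
    (hf : DifferentiableOn ℂ f (ball 0 R)) (hf0 : f 0 = a)
    (hode : ∀ z ∈ ball (0 : ℂ) R, z * deriv f z = c * (a - f z) - (1 + f z) * q z)
    (hq : ∀ z ∈ ball (0 : ℂ) R, -(c * (1 - a) + (1 - |a|) / (1 + |a|)) < 2 * (q z).re) :
    ∀ z ∈ ball (0 : ℂ) R, ‖f z‖ < 1 := by
  intro z₁ hz₁
  by_contra! hge
  have hf0_lt : ‖f 0‖ < 1 := by simpa [hf0] using ha
  obtain ⟨z₀, hz₀, hone, hlt⟩ :=
    exists_mem_ball_eq_and_forall_norm_lt hf.continuousOn.norm hf0_lt hz₁ hge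
  have hz₀_ne : z₀ ≠ 0 := by
    rintro rfl
    exact hf0_lt.ne hone
  have hderiv : HasDerivAt f (deriv f z₀) z₀ :=
    (hf.differentiableAt (isOpen_ball.mem_nhds hz₀)).hasDerivAt
  obtain ⟨m, hm, hjack⟩ := exists_norm_sub_sq_div_le_and_mul_eq_of_norm_eq_one hz₀_ne
    (hf.mono (ball_subset_ball (mem_ball_zero_iff.1 hz₀).le))
    (fun z hz => mem_ball_zero_iff.2 (hlt z hz)) hderiv hone
  rw [hf0, Complex.norm_real, Real.norm_eq_abs] at hm
  have hm_ge : (1 - |a|) / (1 + |a|) ≤ m := (one_sub_abs_div_one_add_abs_le ha hone).trans hm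
  have hm_pos : 0 < m := (div_pos (sub_pos.2 ha) (by positivity)).trans_le hm_ge
  have heq := hjack.symm.trans (hode z₀ hz₀)
  have hne : 1 + f z₀ ≠ 0 := by
    intro h
    have hfz : f z₀ = -1 := by linear_combination h
    have hm_eq : -m = c * (a + 1) := by
      rw [hfz] at heq
      exact_mod_cast (by linear_combination heq : (-m : ℂ) = c * (a + 1))
    nlinarith [neg_lt_of_abs_lt ha]
  linarith [two_mul_re_eq_of_norm_eq_one hone hne heq, hq z₀ hz₀]

section Hfun

variable {α : ℝ} {z : ℂ}

theorem mem_unitDisk : z ∈ unitDisk ↔ ‖z‖ < 1 :=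
  mem_ball_zero_iff

theorem zero_mem_unitDisk : (0 : ℂ) ∈ unitDisk :=
  mem_ball_self one_pos

theorem unitDisk_mem_nhds (hz : z ∈ unitDisk) : unitDisk ∈ nhds z :=
  isOpen_ball.mem_nhds hz

theorem one_sub_mem_slitPlane (hz : z ∈ unitDisk) : 1 - z ∈ Complex.slitPlane := by
  rw [sub_eq_add_neg]
  exact Complex.mem_slitPlane_of_norm_lt_one ((norm_neg z).trans_lt (mem_unitDisk.1 hz))

theorem hasDerivAt_one_sub_cpow (c : ℂ) (hz : z ∈ unitDisk) :
    HasDerivAt (fun z : ℂ => (1 - z) ^ c) (-c * (1 - z) ^ (c - 1)) z := by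
  refine (((hasDerivAt_id z).const_sub 1).cpow_const (one_sub_mem_slitPlane hz)).congr_deriv ?_
  simp

theorem hasDerivAt_kfun (α : ℝ) (hz : z ∈ unitDisk) :
    HasDerivAt (kfun α) ((1 - z) ^ (2 * α - 2 : ℂ)) z := by
  by_cases hα : α = 1 / 2
  · have hk : kfun α = fun z => -Complex.log (1 - z) := by
      funext z
      simp [kfun, hα]
    rw [hk]
    refine (((hasDerivAt_id z).const_sub 1).clog (one_sub_mem_slitPlane hz)).neg.congr_deriv ?_
    rw [hα]
    norm_num [Complex.cpow_neg_one, neg_div]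
  · have hk : kfun α =
        fun z => ((1 - z) ^ ((2 * α - 1 : ℝ) : ℂ) - 1) / ((1 - 2 * α : ℝ) : ℂ) := by
      funext z
      simp only [kfun, if_neg hα]
    have hne : (1 - 2 * α : ℂ) ≠ 0 := by
      have : (1 - 2 * α : ℝ) ≠ 0 := fun h => hα (by linarith)
      exact_mod_cast this
    rw [hk]
    refine (((hasDerivAt_one_sub_cpow _ hz).sub_const 1).div_const _).congr_deriv ?_
    have hexp : ((2 * α - 1 : ℝ) : ℂ) - 1 = 2 * α - 2 := by
      push_cast
      ring
    rw [hexp]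
    push_cast
    field_simp
    ring

theorem kfun_zero (α : ℝ) : kfun α 0 = 0 := by
  simp [kfun]

theorem hfun_eq_dslope (α : ℝ) : hfun α = dslope (kfun α) 0 := by
  funext z
  rcases eq_or_ne z 0 with rfl | hz
  · simp [hfun, (hasDerivAt_kfun α zero_mem_unitDisk).deriv]
  · simp [hfun, hz, dslope_of_ne, slope, kfun_zero, div_eq_inv_mul]

theorem mul_hfun (α : ℝ) (z : ℂ) : z * hfun α z = kfun α z := by
  simpa [hfun_eq_dslope, kfun_zero] using sub_smul_dslope (kfun α) 0 z

theorem differentiableOn_hfun (α : ℝ) : DifferentiableOn ℂ (hfun α) unitDisk := by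
  rw [hfun_eq_dslope, Complex.differentiableOn_dslope (unitDisk_mem_nhds zero_mem_unitDisk)]
  exact fun z hz => (hasDerivAt_kfun α hz).differentiableAt.differentiableWithinAt

theorem hasDerivAt_hfun (α : ℝ) (hz : z ∈ unitDisk) :
    HasDerivAt (hfun α) (deriv (hfun α) z) z :=
  ((differentiableOn_hfun α).differentiableAt (unitDisk_mem_nhds hz)).hasDerivAt

theorem hasDerivAt_deriv_hfun (α : ℝ) (hz : z ∈ unitDisk) :
    HasDerivAt (deriv (hfun α)) (deriv (deriv (hfun α)) z) z :=
  (((differentiableOn_hfun α).deriv isOpen_ball).differentiableAt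
    (unitDisk_mem_nhds hz)).hasDerivAt

theorem hfun_add_mul_deriv_hfun (α : ℝ) (hz : z ∈ unitDisk) :
    hfun α z + z * deriv (hfun α) z = (1 - z) ^ (2 * α - 2 : ℂ) := by
  have h := (hasDerivAt_id z).mul (hasDerivAt_hfun α hz)
  have hmul : id * hfun α = kfun α := funext (mul_hfun α)
  rw [hmul] at h
  simpa using h.unique (hasDerivAt_kfun α hz)

theorem two_mul_deriv_hfun_add_mul_deriv_deriv_hfun (α : ℝ) (hz : z ∈ unitDisk) :
    2 * deriv (hfun α) z + z * deriv (deriv (hfun α)) z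
      = 2 * (1 - α) * (1 - z) ^ (-(3 - 2 * α) : ℂ) := by
  have hleft := (hasDerivAt_hfun α hz).add ((hasDerivAt_id z).mul (hasDerivAt_deriv_hfun α hz))
  have hright := (hasDerivAt_one_sub_cpow (2 * α - 2) hz).congr_of_eventuallyEq
    (Filter.eventually_of_mem (unitDisk_mem_nhds hz) fun _ => hfun_add_mul_deriv_hfun α)
  have h := hleft.unique hright
  have hexp : (2 * α - 2 : ℂ) - 1 = -(3 - 2 * α) := by ring
  rw [hexp] at h
  simp only [id] at h
  linear_combination h

/-- The normalized derivative `(1 - z)^(3 - 2α) h_α'(z) / (1 - α)`, meant for `α ≠ 1`. It is the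
reciprocal of `1 + z h_α''(z) / (2 h_α'(z))`; unlike the latter, it is obviously analytic. -/
noncomputable def hfunRatio (α : ℝ) (z : ℂ) : ℂ :=
  (1 - z) ^ (3 - 2 * α : ℂ) * deriv (hfun α) z / (1 - α)

theorem one_sub_cpow_mul_eq (α : ℝ) (hz : z ∈ unitDisk) :
    (1 - z) ^ (3 - 2 * α : ℂ) * (2 * deriv (hfun α) z + z * deriv (deriv (hfun α)) z)
      = 2 * (1 - α) := by
  have hne : 1 - z ≠ 0 := Complex.slitPlane_ne_zero (one_sub_mem_slitPlane hz)
  have hpow : (1 - z) ^ (3 - 2 * α : ℂ) ≠ 0 := by simp [Complex.cpow_eq_zero_iff, hne]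
  rw [two_mul_deriv_hfun_add_mul_deriv_deriv_hfun α hz, Complex.cpow_neg]
  field_simp

theorem hfunRatio_mul_eq (hα : α ≠ 1) (hz : z ∈ unitDisk) :
    hfunRatio α z * (2 * deriv (hfun α) z + z * deriv (deriv (hfun α)) z)
      = 2 * deriv (hfun α) z := by
  have hα' : (1 - α : ℂ) ≠ 0 := sub_ne_zero.2 (mod_cast hα.symm)
  rw [hfunRatio]
  field_simp
  linear_combination deriv (hfun α) z * one_sub_cpow_mul_eq α hz

theorem hfunRatio_zero (hα : α ≠ 1) : hfunRatio α 0 = 1 := by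
  have hα' : (1 - α : ℂ) ≠ 0 := sub_ne_zero.2 (mod_cast hα.symm)
  have h := one_sub_cpow_mul_eq α zero_mem_unitDisk
  simp only [sub_zero, Complex.one_cpow, one_mul, zero_mul, add_zero] at h
  rw [hfunRatio, sub_zero, Complex.one_cpow, one_mul, div_eq_one_iff_eq hα']
  linear_combination h / 2

theorem hasDerivAt_hfunRatio (α : ℝ) (hz : z ∈ unitDisk) :
    HasDerivAt (hfunRatio α) (((1 - z) ^ (3 - 2 * α : ℂ) * deriv (deriv (hfun α)) z
      - (3 - 2 * α) * ((1 - z) ^ (3 - 2 * α : ℂ) / (1 - z)) * deriv (hfun α) z) / (1 - α)) z := by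
  have hne : 1 - z ≠ 0 := Complex.slitPlane_ne_zero (one_sub_mem_slitPlane hz)
  refine (((hasDerivAt_one_sub_cpow _ hz).mul (hasDerivAt_deriv_hfun α hz)).div_const
    _).congr_deriv ?_
  rw [Complex.cpow_sub _ _ hne, Complex.cpow_one]
  ring

theorem mul_deriv_hfunRatio (hα : α ≠ 1) (hz : z ∈ unitDisk) :
    z * deriv (hfunRatio α) z
      = 2 * (1 - hfunRatio α z) - hfunRatio α z * ((3 - 2 * α) * (z / (1 - z))) := by
  have hα' : (1 - α : ℂ) ≠ 0 := sub_ne_zero.2 (mod_cast hα.symm)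
  have hne : 1 - z ≠ 0 := Complex.slitPlane_ne_zero (one_sub_mem_slitPlane hz)
  rw [(hasDerivAt_hfunRatio α hz).deriv, hfunRatio]
  field_simp
  linear_combination (1 - z) * one_sub_cpow_mul_eq α hz

/-- `ζ ↦ (1 + ζ) / (1 + a)` maps the unit disk onto the disk with diameter `[0, 2 / (1 + a)]`, the
image of the half-plane `(1 + a) / 2 < re` under inversion. -/
theorem norm_one_add_mul_hfunRatio_sub_one_lt_one {a : ℝ} (hα1 : α ≠ 1) (hα : α < 3 / 2)
    (ha : |a| < 1) (h : 3 - 2 * α ≤ 2 * (1 - a) + (1 - |a|) / (1 + |a|)) (hz : z ∈ unitDisk) :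
    ‖(1 + a) * hfunRatio α z - 1‖ < 1 := by
  have hderiv : ∀ z ∈ unitDisk, HasDerivAt (fun z => (1 + a) * hfunRatio α z - 1)
      ((1 + a) * deriv (hfunRatio α) z) z := fun z hz =>
    ((hasDerivAt_hfunRatio α hz).differentiableAt.hasDerivAt.const_mul (1 + a : ℂ)).sub_const 1
  refine norm_lt_one_of_mul_deriv_eq (f := fun z => (1 + a) * hfunRatio α z - 1)
    (q := fun z => ((3 - 2 * α : ℝ) : ℂ) * (z / (1 - z))) ha zero_le_two
    (fun z hz => (hderiv z hz).differentiableAt.differentiableWithinAt)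
    (by simp [hfunRatio_zero hα1]) (fun z hz => ?_) (fun z hz => ?_) z hz
  · rw [(hderiv z hz).deriv]
    push_cast
    linear_combination (1 + a) * mul_deriv_hfunRatio hα1 hz
  · rw [Complex.re_ofReal_mul]
    nlinarith [neg_half_lt_re_div_one_sub (mem_unitDisk.1 hz)]

theorem deriv_hfun_ne_zero_and_lt_re {a : ℝ} (hα1 : α ≠ 1) (hα : α < 3 / 2)
    (ha : |a| < 1) (h : 3 - 2 * α ≤ 2 * (1 - a) + (1 - |a|) / (1 + |a|)) (hz : z ∈ unitDisk) :
    deriv (hfun α) z ≠ 0 ∧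
      a < (1 + z * deriv (deriv (hfun α)) z / deriv (hfun α) z).re := by
  have hnorm := norm_one_add_mul_hfunRatio_sub_one_lt_one hα1 hα ha h hz
  have ha_pos : 0 < 1 + a := by linarith [neg_lt_of_abs_lt ha]
  have ha_ne : (1 + a : ℂ) ≠ 0 := mod_cast ha_pos.ne'
  have hG : hfunRatio α z ≠ 0 := by
    intro h0
    simp [h0] at hnorm
  have hh' : deriv (hfun α) z ≠ 0 := by
    intro h0
    exact hG (by simp [hfunRatio, h0])
  have hquot : 1 + z * deriv (deriv (hfun α)) z / deriv (hfun α) z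
      = ((2 * (1 + a) : ℝ) : ℂ) * (1 + ((1 + a) * hfunRatio α z - 1))⁻¹ - 1 := by
    rw [add_sub_cancel]
    push_cast
    field_simp
    linear_combination hfunRatio_mul_eq hα1 hz
  refine ⟨hh', ?_⟩
  rw [hquot, Complex.sub_re, Complex.re_ofReal_mul, Complex.one_re]
  nlinarith [one_half_lt_re_inv_one_add hnorm]

theorem deriv_hfun_ne_zero_and_div_lt_re (hα0 : 0 ≤ α) (hα : α < 3 / 2) (hα1 : α ≠ 1)
    (hz : z ∈ unitDisk) :
    deriv (hfun α) z ≠ 0 ∧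
      α / (3 - α) < (1 + z * deriv (deriv (hfun α)) z / deriv (hfun α) z).re := by
  have h3 : 0 < 3 - α := by linarith
  have h32 : 0 < 3 - 2 * α := by linarith
  have habs : |α / (3 - α)| = α / (3 - α) := abs_of_nonneg (by positivity)
  have hgap : 2 * (1 - α / (3 - α)) + (1 - α / (3 - α)) / (1 + α / (3 - α)) - (3 - 2 * α)
      = 2 * α * (3 - 2 * α) / (3 * (3 - α)) := by
    field_simp
    ring
  refine deriv_hfun_ne_zero_and_lt_re hα1 hα ?_ ?_ hz
  · rw [habs, div_lt_one h3]
    linarith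
  · rw [habs, ← sub_nonneg, hgap]
    positivity

theorem four_mul_sub_one_div_five_lt_re (hα0 : 1 / 4 ≤ α) (hα : α < 3 / 2) (hα1 : α ≠ 1)
    (hz : z ∈ unitDisk) :
    (4 * α - 1) / 5 < (1 + z * deriv (deriv (hfun α)) z / deriv (hfun α) z).re := by
  have hpos : 0 < 1 + α := by linarith
  have habs : |(4 * α - 1) / 5| = (4 * α - 1) / 5 := abs_of_nonneg (by linarith)
  have hsum : 1 + (4 * α - 1) / 5 = 4 * (1 + α) / 5 := by ring
  have hgap : 2 * (1 - (4 * α - 1) / 5) + (1 - (4 * α - 1) / 5) / (4 * (1 + α) / 5)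
      - (3 - 2 * α) = (3 - 2 * α) ^ 2 / (10 * (1 + α)) := by
    field_simp
    ring
  refine (deriv_hfun_ne_zero_and_lt_re hα1 hα ?_ ?_ hz).2
  · rw [habs]
    linarith
  · rw [habs, hsum, ← sub_nonneg, hgap]
    exact div_nonneg (sq_nonneg _) (mul_nonneg (by norm_num) hpos.le)

theorem hfun_re_lower_bounds_general (hα0 : 0 ≤ α) (hα : α < 3 / 2) (hα1 : α ≠ 1)
    (hz : z ∈ unitDisk) :
    deriv (hfun α) z ≠ 0 ∧
      (4 * α - 1) / 5 < (1 + z * deriv (deriv (hfun α)) z / deriv (hfun α) z).re ∧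
      α / (3 - α) < (1 + z * deriv (deriv (hfun α)) z / deriv (hfun α) z).re := by
  obtain ⟨hne, hlt⟩ := deriv_hfun_ne_zero_and_div_lt_re hα0 hα hα1 hz
  refine ⟨hne, ?_, hlt⟩
  rcases le_total α (1 / 4) with hle | hge
  · have hnonneg : 0 ≤ α / (3 - α) := div_nonneg hα0 (by linarith)
    linarith
  · exact four_mul_sub_one_div_five_lt_re hge hα hα1 hz

end Hfun

/-- for `0 < α < 1` and `z ∈ 𝔻`, one has
`Re(1 + z h_α''(z)/h_α'(z)) ≥ (4α-1)/5` when `1/2 ≤ α < 1`, and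
`Re(1 + z h_α''(z)/h_α'(z)) ≥ α/(3-α)` when `0 < α ≤ 1/2`. -/
theorem hfun_re_lower_bounds (α : ℝ) (hα0 : 0 < α) (hα1 : α < 1) :
    ∀ z ∈ unitDisk,
      (1 / 2 ≤ α →
        (4 * α - 1) / 5 ≤ (1 + z * deriv (deriv (hfun α)) z / deriv (hfun α) z).re) ∧
      (α ≤ 1 / 2 →
        α / (3 - α) ≤ (1 + z * deriv (deriv (hfun α)) z / deriv (hfun α) z).re) := by
  intro z hz
  exact (hfun_re_lower_bounds_general hα0.le (by linarith) hα1.ne hz).2.imp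
    (fun h _ => h.le) (fun h _ => h.le)
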